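/- Fix an integer n ≥ 1, reals ν ∈ ℝ, λ > 0, and T > 0. Let f : ℝ × [0, T) → ℝ be C^∞ with f > 0 and f_ρ > 0 everywhere, satisfying ∂f/∂t = f_ρρ/f_ρ + n·f_ρ/f − ν/λ. Let 0 < ε < T and suppose there exists (ρ*, t*) ∈ ℝ × [0, T − ε] at which the function f_ρρ/f_ρ attains its infimum over ℝ × [0, T − ε]. Then (f_ρρ/f_ρ)(ρ*, t*) ≥ min( inf_{σ ∈ ℝ} (f_ρρ/f_ρ)(σ, 0), (f_ρ/f)(ρ*, t*) ). In particular, f_ρρ/f_ρ ≥ min( inf_{σ ∈ ℝ} (f_ρρ/f_ρ)(σ, 0), 0 ) everywhere on ℝ × [0, T − ε]. -/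

import Mathlib

open Set

/-- Partial derivative in the first (spatial) variable `ρ` of a function of `(ρ, t)`. -/
noncomputable def dRho (g : ℝ → ℝ → ℝ) : ℝ → ℝ → ℝ :=
  fun ρ t => deriv (fun s => g s t) ρ

def SM (T : ℝ) (g : ℝ → ℝ → ℝ) : Prop :=
  ContDiffOn ℝ (⊤ : ℕ∞) (fun p : ℝ × ℝ => g p.1 p.2) (univ ×ˢ Ioo 0 T)

noncomputable def dTm (g : ℝ → ℝ → ℝ) : ℝ → ℝ → ℝ :=
  fun ρ t => deriv (fun s => g ρ s) t

lemma isOpen_strip (T : ℝ) : IsOpen ((univ : Set ℝ) ×ˢ Ioo (0:ℝ) T) :=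
  isOpen_univ.prod isOpen_Ioo

lemma SM.at {T : ℝ} {g : ℝ → ℝ → ℝ} (h : SM T g) {ρ t : ℝ} (ht : t ∈ Ioo 0 T) :
    ContDiffAt ℝ (⊤ : ℕ∞) (fun p : ℝ × ℝ => g p.1 p.2) (ρ, t) :=
  h.contDiffAt ((isOpen_strip T).mem_nhds ⟨mem_univ _, ht⟩)

lemma SM.hasF {T : ℝ} {g : ℝ → ℝ → ℝ} (h : SM T g) {ρ t : ℝ} (ht : t ∈ Ioo 0 T) :
    HasFDerivAt (fun p : ℝ × ℝ => g p.1 p.2)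
      (fderiv ℝ (fun p : ℝ × ℝ => g p.1 p.2) (ρ, t)) (ρ, t) :=
  ((h.at ht).differentiableAt (by simp)).hasFDerivAt

lemma SM.r {T : ℝ} {g : ℝ → ℝ → ℝ} (h : SM T g) {ρ t : ℝ} (ht : t ∈ Ioo 0 T) :
    HasDerivAt (fun s => g s t) (fderiv ℝ (fun p : ℝ × ℝ => g p.1 p.2) (ρ, t) (1, 0)) ρ :=
  HasFDerivAt.comp_hasDerivAt (f := fun s : ℝ => (s, t)) ρ (h.hasF ht)
    ((hasDerivAt_id ρ).prodMk (hasDerivAt_const ρ t))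

lemma SM.t {T : ℝ} {g : ℝ → ℝ → ℝ} (h : SM T g) {ρ t : ℝ} (ht : t ∈ Ioo 0 T) :
    HasDerivAt (fun s => g ρ s) (fderiv ℝ (fun p : ℝ × ℝ => g p.1 p.2) (ρ, t) (0, 1)) t :=
  HasFDerivAt.comp_hasDerivAt (f := fun s : ℝ => (ρ, s)) t (h.hasF ht)
    ((hasDerivAt_const t ρ).prodMk (hasDerivAt_id t))

lemma SM.r' {T : ℝ} {g : ℝ → ℝ → ℝ} (h : SM T g) {ρ t : ℝ} (ht : t ∈ Ioo 0 T) :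
    HasDerivAt (fun s => g s t) (dRho g ρ t) ρ :=
  (h.r ht).differentiableAt.hasDerivAt

lemma SM.t' {T : ℝ} {g : ℝ → ℝ → ℝ} (h : SM T g) {ρ t : ℝ} (ht : t ∈ Ioo 0 T) :
    HasDerivAt (fun s => g ρ s) (dTm g ρ t) t :=
  (h.t ht).differentiableAt.hasDerivAt

lemma SM.fd {T : ℝ} {g : ℝ → ℝ → ℝ} (h : SM T g) :
    ContDiffOn ℝ (⊤ : ℕ∞) (fderiv ℝ (fun p : ℝ × ℝ => g p.1 p.2)) (univ ×ˢ Ioo 0 T) :=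
  h.fderiv_of_isOpen (isOpen_strip T) (by simp)

lemma SM.dRho {T : ℝ} {g : ℝ → ℝ → ℝ} (h : SM T g) : SM T (_root_.dRho g) := by
  refine (h.fd.clm_apply (contDiffOn_const (c := ((1:ℝ), (0:ℝ))))).congr ?_
  rintro ⟨ρ, t⟩ ⟨-, ht⟩
  exact (h.r ht).deriv

lemma SM.comm {T : ℝ} {g : ℝ → ℝ → ℝ} (h : SM T g) {ρ t : ℝ} (ht : t ∈ Ioo 0 T) :
    dTm (_root_.dRho g) ρ t = _root_.dRho (dTm g) ρ t := by
  set F := fun p : ℝ × ℝ => g p.1 p.2 with hF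
  have hd : HasFDerivAt (fderiv ℝ F) (fderiv ℝ (fderiv ℝ F) (ρ, t)) (ρ, t) :=
    ((h.fd.contDiffAt ((isOpen_strip T).mem_nhds ⟨mem_univ _, ht⟩)).differentiableAt
      (by simp)).hasFDerivAt
  have hs : IsSymmSndFDerivAt ℝ F (ρ, t) :=
    (h.at ht).isSymmSndFDerivAt (by simpa using WithTop.coe_le_coe.2 (le_top : (2:ℕ∞) ≤ ⊤))
  have e1 : HasDerivAt (fun s => fderiv ℝ F (ρ, s) (1, 0))
      (fderiv ℝ (fderiv ℝ F) (ρ, t) (0, 1) (1, 0)) t := by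
    have := HasFDerivAt.comp_hasDerivAt (f := fun s : ℝ => (ρ, s)) t hd
      ((hasDerivAt_const t ρ).prodMk (hasDerivAt_id t))
    simpa using this.clm_apply (hasDerivAt_const t ((1:ℝ), (0:ℝ)))
  have e2 : HasDerivAt (fun s => fderiv ℝ F (s, t) (0, 1))
      (fderiv ℝ (fderiv ℝ F) (ρ, t) (1, 0) (0, 1)) ρ := by
    have := HasFDerivAt.comp_hasDerivAt (f := fun s : ℝ => (s, t)) ρ hd
      ((hasDerivAt_id ρ).prodMk (hasDerivAt_const ρ t))
    simpa using this.clm_apply (hasDerivAt_const ρ ((0:ℝ), (1:ℝ)))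
  have e1' : dTm (_root_.dRho g) ρ t = fderiv ℝ (fderiv ℝ F) (ρ, t) (0, 1) (1, 0) := by
    rw [← e1.deriv]
    apply Filter.EventuallyEq.deriv_eq
    filter_upwards [isOpen_Ioo.mem_nhds ht] with s hs
    exact (h.r hs).deriv
  have e2' : _root_.dRho (dTm g) ρ t = fderiv ℝ (fderiv ℝ F) (ρ, t) (1, 0) (0, 1) := by
    rw [← e2.deriv]
    apply Filter.EventuallyEq.deriv_eq
    filter_upwards with s
    exact (h.t ht).deriv
  rw [e1', e2']
  exact hs _ _

lemma snd_test {u u1 : ℝ → ℝ} {x d : ℝ} (h1 : ∀ y, HasDerivAt u (u1 y) y)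
    (h2 : HasDerivAt u1 d x) (hm : ∀ y, u x ≤ u y) : 0 ≤ d := by
  by_contra! hd
  have hu : deriv u = u1 := funext fun y => (h1 y).deriv
  have hmin : IsLocalMin u x := Filter.Eventually.of_forall hm
  have hmax : IsLocalMax u x := by
    apply isLocalMax_of_deriv_deriv_neg
    · rw [hu, h2.deriv]; exact hd
    · exact hmin.deriv_eq_zero
    · exact (h1 x).continuousAt
  have hc : u =ᶠ[nhds x] fun _ => u x := by
    filter_upwards [hmax] with y hy
    exact le_antisymm hy (hm y)
  have := hc.deriv.deriv_eq
  rw [hu, h2.deriv] at this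
  simp at this
  exact hd.ne this

lemma left_test {v : ℝ → ℝ} {x d : ℝ} (hx : 0 < x) (h : HasDerivAt v d x)
    (hm : ∀ y ∈ Icc 0 x, v x ≤ v y) : d ≤ 0 := by
  have := (hasDerivWithinAt_iff_tendsto_slope' (s := Iio x) (by simp)).1 h.hasDerivWithinAt
  refine le_of_tendsto this ?_
  filter_upwards [Ioo_mem_nhdsLT hx] with y hy
  rw [slope_def_field]
  exact div_nonpos_of_nonneg_of_nonpos (sub_nonneg.2 (hm y ⟨hy.1.le, hy.2.le⟩))
    (sub_nonpos.2 hy.2.le)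

/-- Lower-bound half of part (2) of Lemma 5.2 (est_2): if `f_ρρ/f_ρ` attains its infimum
over the strip `ℝ × [0, T−ε]` at `(ρ*, t*)`, then this infimum is at least
`min( inf_σ (f_ρρ/f_ρ)(σ, 0), (f_ρ/f)(ρ*, t*) )`; in particular
`f_ρρ/f_ρ ≥ min( inf_σ (f_ρρ/f_ρ)(σ, 0), 0 )` on the strip. -/
theorem stmt7 (n : ℕ) (hn : 1 ≤ n) (ν lam T : ℝ) (hlam : 0 < lam) (hT : 0 < T)
    (f : ℝ → ℝ → ℝ)
    (hf : ContDiffOn ℝ (⊤ : ℕ∞) (fun p : ℝ × ℝ => f p.1 p.2) (univ ×ˢ Ico 0 T))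
    (hfpos : ∀ ρ t, t ∈ Ico 0 T → 0 < f ρ t)
    (hfρpos : ∀ ρ t, t ∈ Ico 0 T → 0 < dRho f ρ t)
    (hPDE : ∀ ρ t, t ∈ Ico 0 T →
      deriv (fun τ => f ρ τ) t
        = dRho (dRho f) ρ t / dRho f ρ t + n * dRho f ρ t / f ρ t - ν / lam)
    (ε : ℝ) (hε : 0 < ε) (hεT : ε < T)
    (ρstar tstar : ℝ) (htstar : tstar ∈ Icc 0 (T - ε))
    (hmin : ∀ ρ t, t ∈ Icc 0 (T - ε) →
      dRho (dRho f) ρstar tstar / dRho f ρstar tstar ≤ dRho (dRho f) ρ t / dRho f ρ t) :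
    min (⨅ σ : ℝ, dRho (dRho f) σ 0 / dRho f σ 0) (dRho f ρstar tstar / f ρstar tstar)
      ≤ dRho (dRho f) ρstar tstar / dRho f ρstar tstar ∧
    ∀ ρ t, t ∈ Icc 0 (T - ε) →
      min (⨅ σ : ℝ, dRho (dRho f) σ 0 / dRho f σ 0) 0
        ≤ dRho (dRho f) ρ t / dRho f ρ t := by
  have hle : tstar < T := by linarith [htstar.2]
  have htI : tstar ∈ Ico 0 T := ⟨htstar.1, hle⟩
  have key : min (⨅ σ : ℝ, dRho (dRho f) σ 0 / dRho f σ 0) (dRho f ρstar tstar / f ρstar tstar)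
      ≤ dRho (dRho f) ρstar tstar / dRho f ρstar tstar := by
    rcases htstar.1.eq_or_lt with h0 | h0
    · refine (min_le_left _ _).trans ?_
      rw [← h0]
      refine ciInf_le (f := fun σ => dRho (dRho f) σ 0 / dRho f σ 0) ⟨dRho (dRho f) ρstar tstar / dRho f ρstar tstar, ?_⟩ ρstar
      rintro _ ⟨σ, rfl⟩
      exact hmin σ 0 ⟨le_rfl, by linarith⟩
    · refine (min_le_right _ _).trans ?_
      have ht : tstar ∈ Ioo 0 T := ⟨h0, hle⟩
      have S0 : SM T f := hf.mono (prod_mono le_rfl Ioo_subset_Ico_self)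
      have S1 := S0.dRho
      have S2 := S1.dRho
      set u : ℝ → ℝ → ℝ := fun ρ t => dRho (dRho f) ρ t / dRho f ρ t with hu
      set w : ℝ → ℝ := fun ρ => dRho f ρ tstar / f ρ tstar with hw
      have Su : SM T u := ContDiffOn.div S2 S1
        (fun p hp => (hfρpos p.1 p.2 (Ioo_subset_Ico_self hp.2)).ne')
      have Su1 := Su.dRho
      have p0 : ∀ ρ, 0 < f ρ tstar := fun ρ => hfpos ρ _ htI
      have p1 : ∀ ρ, 0 < dRho f ρ tstar := fun ρ => hfρpos ρ _ htI
      have dw : ∀ ρ, HasDerivAt w (w ρ * (u ρ tstar - w ρ)) ρ := by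
        intro ρ
        refine ((S1.r' (ρ := ρ) ht).div (S0.r' (ρ := ρ) ht) (p0 ρ).ne').congr_deriv ?_
        have := p0 ρ
        have := p1 ρ
        change _ = dRho f ρ tstar / f ρ tstar * (dRho (dRho f) ρ tstar / dRho f ρ tstar
          - dRho f ρ tstar / f ρ tstar)
        field_simp
      have a0 : (fun ρ => dTm f ρ tstar) = fun ρ => u ρ tstar + n * w ρ - ν / lam := by
        funext ρ
        rw [dTm, hPDE ρ tstar htI, mul_div_assoc]
      have a1 : (fun ρ => dTm (dRho f) ρ tstar)
          = fun ρ => dRho u ρ tstar + n * (w ρ * (u ρ tstar - w ρ)) := by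
        funext ρ
        rw [S0.comm ht]
        change deriv (fun ρ => dTm f ρ tstar) ρ = _
        rw [a0]
        exact (((Su.r' ht).add ((dw ρ).const_mul (n:ℝ))).sub_const _).deriv
      have a2 : dTm (dRho (dRho f)) ρstar tstar
          = dRho (dRho u) ρstar tstar + n * (w ρstar * (u ρstar tstar - w ρstar)
            * (u ρstar tstar - w ρstar) + w ρstar * (dRho u ρstar tstar
              - w ρstar * (u ρstar tstar - w ρstar))) := by
        rw [S1.comm ht]
        change deriv (fun ρ => dTm (dRho f) ρ tstar) ρstar = _
        rw [a1]
        exact ((Su1.r' ht).add (((dw ρstar).mul ((Su.r' ht).sub (dw ρstar))).const_mul (n:ℝ))).deriv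
      have hu2 : 0 ≤ dRho (dRho u) ρstar tstar :=
        snd_test (fun y => Su.r' ht) (Su1.r' ht) (fun y => hmin y tstar htstar)
      have hu1 : dRho u ρstar tstar = 0 := by
        have : IsLocalMin (fun s => u s tstar) ρstar :=
          Filter.Eventually.of_forall (fun y => hmin y tstar htstar)
        exact this.deriv_eq_zero
      have hut := left_test h0 ((S2.t' (ρ := ρstar) ht).div (S1.t' (ρ := ρstar) ht) (p1 ρstar).ne')
        (fun y hy => hmin ρstar y ⟨hy.1, hy.2.trans htstar.2⟩)
      have a1' := congrFun a1 ρstar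
      beta_reduce at a1'
      rw [a2, a1', hu1] at hut
      have P1 := p1 ρstar
      have hw0 : 0 < w ρstar := div_pos P1 (p0 ρstar)
      have hf2 : dRho (dRho f) ρstar tstar = u ρstar tstar * dRho f ρstar tstar := by
        simp only [hu]; field_simp
      rw [hf2] at hut
      change w ρstar ≤ u ρstar tstar
      generalize u ρstar tstar = U at *
      generalize w ρstar = W at *
      generalize dRho f ρstar tstar = P at *
      generalize dRho (dRho u) ρstar tstar = D at *
      have hn' : (0:ℝ) < n := by exact_mod_cast hn
      have h3 : P * (D - 2 * n * W ^ 2 * (U - W)) ≤ 0 := by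
        have := (div_le_iff₀ (pow_pos P1 2)).1 hut
        nlinarith
      have h4 : D - 2 * n * W ^ 2 * (U - W) ≤ 0 := by
        by_contra! h
        exact absurd (mul_pos P1 h) (not_lt.2 h3)
      by_contra! h
      have : 0 < 2 * n * W ^ 2 * (W - U) := mul_pos (by positivity) (by linarith)
      nlinarith
  refine ⟨key, fun ρ t ht => le_trans (le_trans ?_ key) (hmin ρ t ht)⟩
  exact min_le_min_left _ (div_pos (hfρpos _ _ htI) (hfpos _ _ htI)).le
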